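/- Let τ and τ′ be matchings of [2n]. The following are equivalent: (1) τ′ ≤ τ in the uncrossing order; (2) f_τ ≤ f_{τ′} in the affine Bruhat order; (3) I_a(f_τ) ≤_a I_a(f_{τ′}) for every a ∈ [2n], in the a-shifted dominance order on (n−1)-element subsets of [2n]. -/

import Mathlib

open Finset

noncomputable section
open scoped Classical

/-- The cyclic (clockwise) half-open interval `(a, b]` in `Fin m`. -/
def cIoc {m : ℕ} (a b : Fin m) : Finset (Fin m) :=
  univ.filter fun k => if a < b then a < k ∧ k ≤ b else a < k ∨ k ≤ b

/-- The open cyclic (clockwise) arc from `a` to `b` in `Fin m`, excluding both endpoints. -/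
def cIoo {m : ℕ} (a b : Fin m) : Finset (Fin m) :=
  univ.filter fun k => if a < b then a < k ∧ k < b else (a < k ∨ k < b) ∧ k ≠ a ∧ k ≠ b

/-- Set partitions of `[n] = Fin n`. -/
abbrev NCP (n : ℕ) := Finpartition (univ : Finset (Fin n))

/-- `a` and `b` lie in the same block of `σ`. -/
def sameBlock {n : ℕ} (σ : NCP n) (a b : Fin n) : Prop :=
  ∃ B ∈ σ.parts, a ∈ B ∧ b ∈ B

/-- `σ` is a noncrossing partition: there are no `a < b < c < d` with `a, c` in one
block and `b, d` in a different block. -/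
def IsNoncrossing {n : ℕ} (σ : NCP n) : Prop :=
  ∀ a b c d : Fin n, a < b → b < c → c < d →
    sameBlock σ a c → sameBlock σ b d → sameBlock σ a b

/-- The relation defining the dual (Kreweras complement) partition: `ĩ ~ j̃` iff no block
of `σ` meets both cyclic intervals `{(i+1), …, j}` and `{(j+1), …, i}`. -/
def dualRel {n : ℕ} (σ : NCP n) (i j : Fin n) : Prop :=
  i = j ∨ ¬ ∃ B ∈ σ.parts, (B ∩ cIoc i j).Nonempty ∧ (B ∩ cIoc j i).Nonempty

/-- The point `ī` of `[2n]` (0-based: `ī = 2i`). -/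
def bar {n : ℕ} (i : Fin n) : Fin (2*n) := ⟨2*(i:ℕ), by have := i.isLt; omega⟩

/-- The point `ĩ` of `[2n]` (0-based: `ĩ = 2i+1`). -/
def til {n : ℕ} (i : Fin n) : Fin (2*n) := ⟨2*(i:ℕ)+1, by have := i.isLt; omega⟩

/-- A matching (fixed-point-free involution) of `Fin m`. -/
def IsMatching {m : ℕ} (τ : Fin m → Fin m) : Prop :=
  Function.Involutive τ ∧ ∀ i, τ i ≠ i

/-- A noncrossing matching: there are no `a < b < c < d` with `τ a = c` and `τ b = d`. -/
def IsNCMatching {m : ℕ} (τ : Fin m → Fin m) : Prop :=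
  ¬ ∃ a b c d : Fin m, a < b ∧ b < c ∧ c < d ∧ τ a = c ∧ τ b = d

/-- `j` is the cyclic predecessor of `i` in the block of `σ` containing `i`
(`j = i` when `i` is a singleton). -/
def cyclicPred {n : ℕ} (σ : NCP n) (j i : Fin n) : Prop :=
  ∃ B ∈ σ.parts, i ∈ B ∧ j ∈ B ∧ ∀ x ∈ B, x ∉ cIoo j i

/-- `m` is the medial pairing of `σ`: it pairs `ī` (0-based `2i`) with `j̃` (0-based `2j+1`),
where `j` is the cyclic predecessor of `i` in its block. -/
def IsMedialOf {n : ℕ} (σ : NCP n) (m : Fin (2*n) → Fin (2*n)) : Prop :=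
  ∀ i j : Fin n, m (bar i) = til j ↔ cyclicPred σ j i

/-- The crossing number of a matching: the number of pairs `{a,b}` with
`a < b < τ a < τ b`. -/
def crossNum {m : ℕ} (τ : Fin m → Fin m) : ℕ :=
  ((univ : Finset (Fin m × Fin m)).filter fun p =>
    p.1 < p.2 ∧ p.2 < τ p.1 ∧ τ p.1 < τ p.2).card

/-- `a`, `b`, `c`, `d` are distinct and in cyclic order on `Fin m`. -/
def CyclicOrder4 {m : ℕ} (a b c d : Fin m) : Prop :=
  (a < b ∧ b < c ∧ c < d) ∨ (b < c ∧ c < d ∧ d < a) ∨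
  (c < d ∧ d < a ∧ a < b) ∨ (d < a ∧ a < b ∧ b < c)

/-- `τ` covers `τ'` in the uncrossing order. -/
def UncrossCover {m : ℕ} (τ' τ : Fin m → Fin m) : Prop :=
  IsMatching τ' ∧ IsMatching τ ∧
  ∃ a b c d : Fin m, CyclicOrder4 a b c d ∧ τ a = c ∧ τ b = d ∧
    (∀ x, x ≠ a → x ≠ b → x ≠ c → x ≠ d → τ' x = τ x) ∧
    ((τ' a = d ∧ τ' b = c ∧ ∀ x ∈ cIoo a b, τ x ∉ cIoo c d) ∨
     (τ' a = b ∧ τ' c = d ∧ ∀ x ∈ cIoo b c, τ x ∉ cIoo d a))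

/-- The uncrossing partial order on matchings: reflexive-transitive closure of covers. -/
def uncrossLE {m : ℕ} (τ' τ : Fin m → Fin m) : Prop :=
  Relation.ReflTransGen UncrossCover τ' τ

/-- An affine permutation of period `m`. -/
def IsAffinePerm (m : ℕ) (f : ℤ → ℤ) : Prop :=
  Function.Bijective f ∧ ∀ i : ℤ, f (i + m) = f i + m

/-- The length of an affine permutation of period `m`:
`#{(i,j) : 1 ≤ i ≤ m, i < j, f i > f j}`. -/
def affLen (m : ℕ) (f : ℤ → ℤ) : ℕ :=
  Set.ncard {p : ℤ × ℤ | 1 ≤ p.1 ∧ p.1 ≤ (m:ℤ) ∧ p.1 < p.2 ∧ f p.2 < f p.1}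

/-- The affine rank matrix `r_f(i,j) = #{a ≤ i : f a ≥ j}`. -/
def rankMat (f : ℤ → ℤ) (i j : ℤ) : ℕ :=
  Set.ncard {a : ℤ | a ≤ i ∧ j ≤ f a}

/-- Affine Bruhat order via rank matrices. -/
def bruhatLE (f g : ℤ → ℤ) : Prop := ∀ i j : ℤ, rankMat f i j ≤ rankMat g i j

/-- The sum `Σ_{i=1}^m (f i − i)`. -/
def windowSum (m : ℕ) (f : ℤ → ℤ) : ℤ :=
  ∑ i ∈ Finset.range m, (f ((i:ℤ)+1) - ((i:ℤ)+1))

/-- The affine permutation `g_τ` associated to a matching `τ` of `[2n]`: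
on `[2n]`, `g_τ i = τ i` if `τ i > i` and `g_τ i = τ i + 2n` if `τ i < i`,
extended periodically. -/
def gTau (n : ℕ) (τ : Fin (2*n) → Fin (2*n)) (i : ℤ) : ℤ :=
  if h : (i % ((2*n : ℕ) : ℤ)).toNat < 2*n then
    let r : Fin (2*n) := ⟨(i % ((2*n : ℕ) : ℤ)).toNat, h⟩
    (i - i % ((2*n : ℕ) : ℤ)) +
      (if r < τ r then ((τ r : ℕ) : ℤ) else ((τ r : ℕ) : ℤ) + 2*n)
  else i

/-- `f_τ = g_τ − 1`. -/
def fTau (n : ℕ) (τ : Fin (2*n) → Fin (2*n)) (i : ℤ) : ℤ := gTau n τ i - 1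

/-- An electrical affine permutation for `n`. -/
def IsElectrical (n : ℕ) (f : ℤ → ℤ) : Prop :=
  IsAffinePerm (2*n) f ∧
  (∀ i : ℤ, i ≤ f i ∧ f i ≤ i + 2*n - 2) ∧
  windowSum (2*n) f = ((n:ℤ) - 1) * (2*n) ∧
  ∀ i : ℤ, (f (f i + 1) - (i - 1)) % ((2*n : ℕ) : ℤ) = 0

/-- The Grassmann necklace subset `I_a(f) ⊆ [m]`: representatives in `[m]` (0-based) of
`{f b mod m : b < a and f b ≥ a}`. -/
def necklaceI (m : ℕ) (f : ℤ → ℤ) (a : ℤ) : Finset (Fin m) :=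
  univ.filter fun x => ∃ b : ℤ, b < a ∧ a ≤ f b ∧ f b % (m:ℤ) = ((x:ℕ):ℤ)

/-- The dual necklace subset `J_a(f) ⊆ [m]`: representatives in `[m]` (0-based) of
`{b mod m : b < a and f b ≥ a}`. -/
def necklaceJ (m : ℕ) (f : ℤ → ℤ) (a : ℤ) : Finset (Fin m) :=
  univ.filter fun x => ∃ b : ℤ, b < a ∧ a ≤ f b ∧ b % (m:ℤ) = ((x:ℕ):ℤ)

/-- Dominance order on `k`-element subsets of `Fin m`:
the `r`-th smallest element of `I` is at most the `r`-th smallest element of `J`. -/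
def domLE {m : ℕ} (k : ℕ) (I J : Finset (Fin m)) : Prop :=
  ∃ (hI : I.card = k) (hJ : J.card = k),
    ∀ r : Fin k, I.orderEmbOfFin hI r ≤ J.orderEmbOfFin hJ r

/-- `a`-shifted dominance order: rotate so that `a` becomes least, then compare. -/
def sdomLE {m : ℕ} (k : ℕ) (a : Fin m) (I J : Finset (Fin m)) : Prop :=
  domLE k (I.image (· - a)) (J.image (· - a))

/-- `a`-shifted lexicographic order on subsets of `Fin m`. -/
def lexLE {m : ℕ} (a : Fin m) (I J : Finset (Fin m)) : Prop :=
  I = J ∨ List.Lex (· < ·) ((I.image (· - a)).sort (· ≤ ·)) ((J.image (· - a)).sort (· ≤ ·))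

/-- A Catalan subset of `[2n]` (0-based): an `(n−1)`-subset such that the length-`2n`
word with `U` at positions `{0} ∪ {x+1 : x ∈ I}` and `D` elsewhere is a Dyck path. -/
def IsCatalan {n : ℕ} (I : Finset (Fin (2*n))) : Prop :=
  I.card = n - 1 ∧
  ∀ p : ℕ, p ≤ 2*n →
    p ≤ 2 * ((insert 0 (I.image fun x => (x:ℕ)+1)).filter (· < p)).card

/-- Catalan subset with respect to the shifted order `≤_a`. -/
def IsCatalanAt {n : ℕ} (a : Fin (2*n)) (I : Finset (Fin (2*n))) : Prop :=
  IsCatalan (I.image (· - a))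

/-- The set of maxima of `S` with respect to the `a`-shifted order. -/
def maxAt {m : ℕ} (a : Fin m) (S : Finset (Fin m)) : Finset (Fin m) :=
  S.filter fun x => ∀ y ∈ S, y - a ≤ x - a

/-- `I_a(σ)` for a noncrossing partition `σ`: the complement in `[2n]` of the set of
`≤_a`-maxima of the blocks of `σ` (embedded by `bar`) and of the blocks of the dual
partition `σ̃` (embedded by `til`). -/
def IaP {n : ℕ} (σ : NCP n) (a : Fin (2*n)) : Finset (Fin (2*n)) :=
  univ \ ((σ.parts.biUnion fun B => maxAt a (B.image bar)) ∪
          ((univ : Finset (Fin n)).biUnion fun i =>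
            maxAt a ((univ.filter (dualRel σ i)).image til)))

/-- `I` is concordant with `σ`: `I` has `n−1` elements and every block of `σ` and of
its dual `σ̃` contains exactly one element of `[2n] ∖ I`. -/
def Concordant {n : ℕ} (σ : NCP n) (I : Finset (Fin (2*n))) : Prop :=
  I.card = n - 1 ∧
  (∀ B ∈ σ.parts, ((B.image bar) ∩ (univ \ I)).card = 1) ∧
  (∀ i : Fin n, (((univ.filter (dualRel σ i)).image til) ∩ (univ \ I)).card = 1)

/-- `E(I)`: the set of noncrossing partitions concordant with `I`. -/
def ESet {n : ℕ} (I : Finset (Fin (2*n))) : Set (NCP n) :=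
  {σ | IsNoncrossing σ ∧ Concordant σ I}

/-- The maximal minor `Δ_I(X)` on the columns indexed by `I`, in increasing order. -/
def minorOn {k m : ℕ} (X : Matrix (Fin k) (Fin m) ℝ) (I : Finset (Fin m)) : ℝ :=
  if h : I.card = k then (X.submatrix id fun r => I.orderEmbOfFin h r).det else 0

/-- `X` is totally nonnegative: it has full rank `k` and all maximal minors are `≥ 0`. -/
def IsTNN {k m : ℕ} (X : Matrix (Fin k) (Fin m) ℝ) : Prop :=
  X.rank = k ∧ ∀ I : Finset (Fin m), I.card = k → 0 ≤ minorOn X I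

/-- `t` times the matrix unit `E_{p,q}` (0-based indices). -/
def matE (m : ℕ) (p q : ℕ) (t : ℝ) : Matrix (Fin m) (Fin m) ℝ :=
  Matrix.of fun r s => if (r:ℕ) = p ∧ (s:ℕ) = q then t else 0

/-- `x_i(t) = Id + t·E_{i,i+1}` (1-based index `i`). -/
def xB (m i : ℕ) (t : ℝ) : Matrix (Fin m) (Fin m) ℝ := 1 + matE m (i-1) i t

/-- `y_i(t) = Id + t·E_{i+1,i}` (1-based index `i`). -/
def yB (m i : ℕ) (t : ℝ) : Matrix (Fin m) (Fin m) ℝ := 1 + matE m i (i-1) t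

/-- `u_i(t) = x_i(t)·y_{i−1}(t)` (1-based index `i`). -/
def uB (m i : ℕ) (t : ℝ) : Matrix (Fin m) (Fin m) ℝ := xB m i t * yB m (i-1) t

/-- The columns of `X`, extended `n`-periodically to all integer indices (0-based). -/
def colP {k n : ℕ} (X : Matrix (Fin k) (Fin n) ℝ) (i : ℤ) : Fin k → ℝ :=
  fun r => if h : (i % (n:ℤ)).toNat < n then X r ⟨(i % (n:ℤ)).toNat, h⟩ else 0

/-- `f_X(i) = min { j ≥ i : v_i ∈ span(v_{i+1}, …, v_j) }` (0-based columns). -/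
def fX {k n : ℕ} (X : Matrix (Fin k) (Fin n) ℝ) (i : ℤ) : ℤ :=
  sInf {j : ℤ | i ≤ j ∧ colP X i ∈ Submodule.span ℝ (colP X '' Set.Ioc i j)}

/-- Fintype instance for finite partitions of a finite set. -/
instance {α : Type*} [DecidableEq α] [Fintype α] (s : Finset α) : Fintype (Finpartition s) :=
  Fintype.ofInjective Finpartition.parts fun _ _ h => Finpartition.ext h

/-- The sorted list of (the values of) a subset of `Fin m`. -/
def sortedL {m : ℕ} (I : Finset (Fin m)) : List ℕ :=
  (I.sort (· ≤ ·)).map Fin.val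

/-- The number of inversions of a list (= the number of adjacent transpositions
needed to sort it, when entries are distinct). -/
def invNum (l : List ℕ) : ℕ :=
  ((Finset.range l.length ×ˢ Finset.range l.length).filter fun pq =>
    pq.1 < pq.2 ∧ l.getD pq.2 0 < l.getD pq.1 0).card

/-- The subset of `Fin m` whose values lie in the list `l`. -/
def toFinF {m : ℕ} (l : List ℕ) : Finset (Fin m) :=
  univ.filter fun x => (x:ℕ) ∈ l

/-- The double sum `Σ_{σ ∈ E(l), κ ∈ E(l')} L σ · L κ`, where `E` of a list with a
repeated entry (or an out-of-range entry) is empty. -/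
def pairSum {n : ℕ} (L : NCP n → ℝ) (l l' : List ℕ) : ℝ :=
  if (l.Nodup ∧ ∀ x ∈ l, x < 2*n) ∧ (l'.Nodup ∧ ∀ x ∈ l', x < 2*n) then
    ∑ᶠ σ ∈ ESet (n := n) (toFinF l), ∑ᶠ κ ∈ ESet (n := n) (toFinF l'), L σ * L κ
  else 0

/-- The list obtained from `LI` by replacing its entries at the positions in `S`
(in increasing order of position) by the first `#S` entries of `LJ`. -/
def swapI (LI LJ : List ℕ) (S : Finset ℕ) : List ℕ :=
  (List.range LI.length).map fun p =>
    if p ∈ S then LJ.getD ((S.filter (· < p)).card) 0 else LI.getD p 0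

/-- The list obtained from `LJ` by replacing its first `#S` entries by the entries of
`LI` at the positions in `S`, in increasing order. -/
def swapJ (LI LJ : List ℕ) (S : Finset ℕ) : List ℕ :=
  (List.range LJ.length).map fun p =>
    if p < S.card then LI.getD ((S.sort (· ≤ ·)).getD p 0) 0 else LJ.getD p 0

/-- `g` is the lift to `ℤ` of a fixed-point-free involution of `ℤ / m`, sending each integer to
the first lift of its partner that follows it. -/
structure IsPairingLift (m : ℤ) (g : ℤ → ℤ) : Prop where
  lt_apply : ∀ i, i < g i
  apply_lt : ∀ i, g i < i + m
  apply_apply : ∀ i, g (g i) = i + m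

/-- The number of pairs contained in the cyclic arc `[x, y]`. -/
def pairCount (g : ℤ → ℤ) (x y : ℤ) : ℕ := ((Finset.Icc x y).filter fun i => g i ≤ y).card

namespace IsPairingLift

variable {m : ℤ} {g g' g'' : ℤ → ℤ}

lemma apply_add (hg : IsPairingLift m g) (i : ℤ) : g (i + m) = g i + m := by
  rw [← hg.apply_apply i, hg.apply_apply (g i)]

lemma apply_add_mul (hg : IsPairingLift m g) (i k : ℤ) : g (i + m * k) = g i + m * k := by
  induction k using Int.induction_on with
  | zero => simp
  | succ k ih =>
    have := hg.apply_add (i + m * k)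
    rw [show i + m * ((k : ℤ) + 1) = i + m * k + m by ring, this, ih]; ring
  | pred k ih =>
    have := hg.apply_add (i + m * (-(k : ℤ) - 1))
    rw [show i + m * (-(k : ℤ) - 1) + m = i + m * (-k) by ring, ih] at this
    linarith

lemma apply_sub (hg : IsPairingLift m g) (i : ℤ) : g (i - m) = g i - m := by
  have := hg.apply_add (i - m)
  rw [sub_add_cancel] at this
  omega

lemma injective (hg : IsPairingLift m g) : Function.Injective g := fun i j h => by
  have h1 := hg.apply_apply i
  have h2 := hg.apply_apply j
  rw [h] at h1
  omega

lemma pos (hg : IsPairingLift m g) : 0 < m := by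
  have h1 := hg.lt_apply 0
  have h2 := hg.apply_lt 0
  omega

lemma pairCount_of_lt {x y : ℤ} (h : y < x) : pairCount g x y = 0 := by
  simp [pairCount, Finset.Icc_eq_empty (not_le.2 h)]

lemma pairCount_eq_add_card (hg : IsPairingLift m g) {x z : ℤ} (hxz : x ≤ z) (y : ℤ) :
    pairCount g x y = pairCount g z y + ((Finset.Ico x z).filter fun i => g i ≤ y).card := by
  unfold pairCount
  rw [← Finset.card_union_of_disjoint]
  · congr 1
    ext i
    have := hg.lt_apply i
    simp only [Finset.mem_filter, Finset.mem_Icc, Finset.mem_union, Finset.mem_Ico]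
    omega
  · rw [Finset.disjoint_left]
    intro i
    simp only [Finset.mem_filter, Finset.mem_Icc, Finset.mem_Ico]
    omega

lemma pairCount_eq_succ (hg : IsPairingLift m g) (x y : ℤ) :
    pairCount g x y = pairCount g (x + 1) y + if g x ≤ y then 1 else 0 := by
  rw [hg.pairCount_eq_add_card (show x ≤ x + 1 by omega)]
  congr 1
  have : Finset.Ico x (x + 1) = {x} := by
    ext i; simp only [Finset.mem_Ico, Finset.mem_singleton]; omega
  rw [this, Finset.filter_singleton]
  split_ifs <;> simp

lemma pairCount_add_mul (hg : IsPairingLift m g) (x y k : ℤ) :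
    pairCount g (x + m * k) (y + m * k) = pairCount g x y := by
  unfold pairCount
  symm
  apply Finset.card_bij (fun i _ => i + m * k)
  · intro i
    simp only [Finset.mem_filter, Finset.mem_Icc, hg.apply_add_mul]
    omega
  · intro i _ j _ h
    omega
  · intro j hj
    have h := hg.apply_add_mul (j - m * k) k
    rw [sub_add_cancel] at h
    simp only [Finset.mem_filter, Finset.mem_Icc] at hj ⊢
    exact ⟨j - m * k, by omega, by omega⟩

lemma two_mul_card_through (hg : IsPairingLift m g) (y : ℤ) :
    2 * (((Finset.Ioc (y - m) y).filter fun i => y < g i).card : ℤ) = m := by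
  have hm := hg.pos
  have h1 : ((Finset.Ioc (y - m) y).filter fun i => ¬ y < g i).card =
      ((Finset.Ioc (y - m) y).filter fun i => y < g i).card := by
    apply Finset.card_bij (fun i _ => g i)
    · intro i
      have := hg.lt_apply i
      simp only [Finset.mem_filter, Finset.mem_Ioc, hg.apply_apply]
      omega
    · intro i _ j _ h
      exact hg.injective h
    · intro j hj
      simp only [Finset.mem_filter, Finset.mem_Ioc] at hj ⊢
      have h2 := hg.apply_sub (g j)
      rw [hg.apply_apply] at h2
      have := hg.apply_lt j
      exact ⟨g j - m, by omega, by omega⟩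
  have h2 := Finset.card_filter_add_card_filter_not (s := Finset.Ioc (y - m) y) (fun i => y < g i)
  rw [h1, Int.card_Ioc] at h2
  omega

/-- Counting pairs inside an arc amounts to counting pairs inside the complementary arc. -/
lemma two_mul_pairCount_compl (hg : IsPairingLift m g) {x y : ℤ} (hxy : x ≤ y + 1) :
    2 * (pairCount g x y : ℤ) = 2 * (y - x + 1) - m + 2 * pairCount g (y + 1 - m) (x - 1) := by
  have hm := hg.pos
  have h0 := hg.two_mul_card_through y
  have h1 := Finset.card_filter_add_card_filter_not (s := Finset.Icc x y) (fun i => g i ≤ y)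
  have h2 : ((Finset.Ioc (y - m) y).filter fun i => y < g i).card =
      ((Finset.Icc x y).filter fun i => ¬ g i ≤ y).card +
        ((Finset.Ioc (y - m) (x - 1)).filter fun i => y < g i).card := by
    rw [← Finset.card_union_of_disjoint]
    · congr 1
      ext i
      have := hg.apply_lt i
      simp only [Finset.mem_filter, Finset.mem_Icc, Finset.mem_union, Finset.mem_Ioc]
      omega
    · rw [Finset.disjoint_left]
      intro i
      simp only [Finset.mem_filter, Finset.mem_Icc, Finset.mem_Ioc]
      omega
  have h3 : pairCount g (y + 1 - m) (x - 1) =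
      ((Finset.Ioc (y - m) (x - 1)).filter fun i => y < g i).card := by
    apply Finset.card_bij (fun i _ => g i)
    · intro i
      have := hg.lt_apply i
      simp only [Finset.mem_filter, Finset.mem_Icc, Finset.mem_Ioc, hg.apply_apply]
      omega
    · intro i _ j _ h
      exact hg.injective h
    · intro j hj
      simp only [Finset.mem_filter, Finset.mem_Icc, Finset.mem_Ioc] at hj ⊢
      have h2 := hg.apply_sub (g j)
      rw [hg.apply_apply] at h2
      have := hg.apply_lt j
      exact ⟨g j - m, by omega, by omega⟩
  rw [Int.card_Icc] at h1
  unfold pairCount at *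
  omega

lemma two_mul_pairCount_of_le (hg : IsPairingLift m g) {x y : ℤ} (hxy : x + m ≤ y + 1) :
    2 * (pairCount g x y : ℤ) = 2 * (y - x + 1) - m := by
  have := hg.pos
  rw [hg.two_mul_pairCount_compl (by omega), pairCount_of_lt (by omega)]
  simp

lemma pairCount_eq_sum (hg : IsPairingLift m g) {x y : ℤ} (hxy : y < x + m) :
    (pairCount g x y : ℤ) = ∑ i ∈ Finset.Ico x (x + m), if g i ≤ y then 1 else 0 := by
  rw [pairCount, Finset.sum_boole]
  congr 2
  ext i
  have := hg.lt_apply i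
  simp only [Finset.mem_filter, Finset.mem_Icc, Finset.mem_Ico]
  omega

end IsPairingLift

/-- `g''` is obtained from `g` by replacing the crossing pairs `{a, c}`, `{e, h}` with the pairs
`{a, e}`, `{c, h}`. -/
structure IsUncrossing (m : ℤ) (g g'' : ℤ → ℤ) (h a e c : ℤ) : Prop where
  lt_ha : h < a
  lt_ae : a < e
  lt_ec : e < c
  lt_ch : c < h + m
  apply_a : g a = c
  apply_h : g h = e
  new_a : g'' a = e
  new_h : g'' h = c
  agree : ∀ i, ¬ m ∣ i - h → ¬ m ∣ i - a → ¬ m ∣ i - e → ¬ m ∣ i - c → g'' i = g i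

namespace IsUncrossing

variable {m : ℤ} {g g'' : ℤ → ℤ} {h a e c : ℤ}

lemma not_dvd_of_mem_Ico {m x i j : ℤ} (hi : i ∈ Finset.Ico x (x + m))
    (hj : j ∈ Finset.Ico x (x + m)) (hij : i ≠ j) : ¬ m ∣ i - j := by
  rw [Finset.mem_Ico] at hi hj
  intro hd
  have := Int.eq_zero_of_abs_lt_dvd hd (abs_lt.2 ⟨by omega, by omega⟩)
  omega

lemma sum_sub_sum_of_agree {m x : ℤ} {F F'' : ℤ → ℤ} {p q r s : ℤ}
    (hp : x ≤ p) (hpq : p < q) (hqr : q < r) (hrs : r < s) (hs : s < x + m)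
    (hF : ∀ i, ¬ m ∣ i - p → ¬ m ∣ i - q → ¬ m ∣ i - r → ¬ m ∣ i - s → F'' i = F i) :
    ∑ i ∈ Finset.Ico x (x + m), F'' i - ∑ i ∈ Finset.Ico x (x + m), F i =
      (F'' p - F p) + (F'' q - F q) + (F'' r - F r) + (F'' s - F s) := by
  have hsub : ({p, q, r, s} : Finset ℤ) ⊆ Finset.Ico x (x + m) := by
    intro i
    simp only [Finset.mem_insert, Finset.mem_singleton, Finset.mem_Ico]
    omega
  rw [← Finset.sum_sub_distrib, ← Finset.sum_subset hsub]
  · rw [Finset.sum_insert, Finset.sum_insert, Finset.sum_insert, Finset.sum_singleton]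
    · ring
    all_goals simp only [Finset.mem_insert, Finset.mem_singleton]; omega
  · intro i hi hn
    simp only [Finset.mem_insert, Finset.mem_singleton, not_or] at hn
    rw [hF i, sub_self]
    · exact not_dvd_of_mem_Ico hi (hsub (by simp)) hn.1
    · exact not_dvd_of_mem_Ico hi (hsub (by simp)) hn.2.1
    · exact not_dvd_of_mem_Ico hi (hsub (by simp)) hn.2.2.1
    · exact not_dvd_of_mem_Ico hi (hsub (by simp)) hn.2.2.2

lemma not_dvd_sub_of_add {m i j : ℤ} (hd : ¬ m ∣ i - (j + m)) : ¬ m ∣ i - j := by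
  intro h
  exact hd (by rw [show i - (j + m) = (i - j) - m by ring]; exact dvd_sub_self_right.2 h)

lemma pairCount_window (hu : IsUncrossing m g g'' h a e c) (hg : IsPairingLift m g)
    (hg'' : IsPairingLift m g'') {x y : ℤ} (h1 : h < x) (h2 : x ≤ h + m) (hxy : y < x + m) :
    (pairCount g'' x y : ℤ) = pairCount g x y +
      if (x ≤ a ∧ e ≤ y ∧ y < c) ∨ (e < x ∧ x ≤ c ∧ h + m ≤ y ∧ y < a + m) then 1 else 0 := by
  obtain ⟨lha, lae, lec, lch, ga, gh, na, nh, hagree⟩ := hu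
  have gc : g c = a + m := by rw [← ga, hg.apply_apply]
  have ge : g e = h + m := by rw [← gh, hg.apply_apply]
  have nc : g'' c = h + m := by rw [← nh, hg''.apply_apply]
  have ne : g'' e = a + m := by rw [← na, hg''.apply_apply]
  rw [hg.pairCount_eq_sum hxy, hg''.pairCount_eq_sum hxy, ← sub_eq_iff_eq_add']
  rcases le_or_gt x a with hxa | hxa
  · rw [sum_sub_sum_of_agree (p := a) (q := e) (r := c) (s := h + m) (by omega) (by omega)
      (by omega) (by omega) (by omega), hg.apply_add, hg''.apply_add, ga, gh, gc, ge, na, nh, nc, ne]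
    · split_ifs <;> omega
    · intro i ia ie ic ih
      rw [hagree i (not_dvd_sub_of_add ih) ia ie ic]
  rcases le_or_gt x e with hxe | hxe
  · rw [sum_sub_sum_of_agree (p := e) (q := c) (r := h + m) (s := a + m) (by omega) (by omega)
      (by omega) (by omega) (by omega), hg.apply_add, hg''.apply_add, hg.apply_add, hg''.apply_add,
      ga, gh, gc, ge, na, nh, nc, ne]
    · split_ifs <;> omega
    · intro i ie ic ih ia
      rw [hagree i (not_dvd_sub_of_add ih) (not_dvd_sub_of_add ia) ie ic]
  rcases le_or_gt x c with hxc | hxc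
  · rw [sum_sub_sum_of_agree (p := c) (q := h + m) (r := a + m) (s := e + m) (by omega) (by omega)
      (by omega) (by omega) (by omega), hg.apply_add, hg''.apply_add, hg.apply_add, hg''.apply_add,
      hg.apply_add, hg''.apply_add, ga, gh, gc, ge, na, nh, nc, ne]
    · split_ifs <;> omega
    · intro i ic ih ia ie
      rw [hagree i (not_dvd_sub_of_add ih) (not_dvd_sub_of_add ia) (not_dvd_sub_of_add ie) ic]
  · rw [sum_sub_sum_of_agree (p := h + m) (q := a + m) (r := e + m) (s := c + m) (by omega)
      (by omega) (by omega) (by omega) (by omega), hg.apply_add, hg''.apply_add, hg.apply_add,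
      hg''.apply_add, hg.apply_add, hg''.apply_add, hg.apply_add, hg''.apply_add,
      ga, gh, gc, ge, na, nh, nc, ne]
    · split_ifs <;> omega
    · intro i ih ia ie ic
      rw [hagree i (not_dvd_sub_of_add ih) (not_dvd_sub_of_add ia) (not_dvd_sub_of_add ie)
        (not_dvd_sub_of_add ic)]

lemma exists_translate {m : ℤ} (hm : 0 < m) (h x : ℤ) : ∃ k, h < x + m * k ∧ x + m * k ≤ h + m := by
  refine ⟨-((x - h - 1) / m), ?_⟩
  have h1 := Int.emod_nonneg (x - h - 1) hm.ne'
  have h2 := Int.emod_lt_of_pos (x - h - 1) hm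
  have h3 := Int.mul_ediv_add_emod (x - h - 1) m
  rw [mul_neg]
  omega

lemma pairCount_mono (hu : IsUncrossing m g g'' h a e c) (hg : IsPairingLift m g)
    (hg'' : IsPairingLift m g'') (x y : ℤ) : pairCount g x y ≤ pairCount g'' x y := by
  rcases lt_or_ge y (x + m) with hxy | hxy
  · obtain ⟨k, hk1, hk2⟩ := exists_translate hg.pos h x
    have := hu.pairCount_window hg hg'' hk1 hk2 (y := y + m * k) (by omega)
    rw [hg.pairCount_add_mul, hg''.pairCount_add_mul] at this
    split_ifs at this <;> omega
  · have h1 := hg.two_mul_pairCount_of_le (x := x) (y := y) (by omega)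
    have h2 := hg''.two_mul_pairCount_of_le (x := x) (y := y) (by omega)
    omega

/-- Uncrossing stays below `g'` as soon as the defect `pairCount g' - pairCount g` is positive on
the arcs separating `{a, e}` from `{c, h}`. -/
lemma pairCount_le_of_pos (hu : IsUncrossing m g g'' h a e c) (hg : IsPairingLift m g)
    (hg'' : IsPairingLift m g'') {g' : ℤ → ℤ} (hg' : IsPairingLift m g')
    (hle : ∀ x y, pairCount g x y ≤ pairCount g' x y)
    (hlt : ∀ x y, h < x → x ≤ a → e ≤ y → y < c → pairCount g x y < pairCount g' x y)
    (x y : ℤ) : pairCount g'' x y ≤ pairCount g' x y := by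
  rcases lt_or_ge y (x + m) with hxy | hxy
  · obtain ⟨k, hk1, hk2⟩ := exists_translate hg.pos h x
    have h1 := hu.pairCount_window hg hg'' hk1 hk2 (y := y + m * k) (by omega)
    have h2 := hle (x + m * k) (y + m * k)
    rw [← hg'.pairCount_add_mul x y k, ← hg''.pairCount_add_mul x y k]
    split_ifs at h1 with hc
    · rcases hc with hc | hc
      · have := hlt (x + m * k) (y + m * k) hk1 hc.1 hc.2.1 hc.2.2
        omega
      · have h3 := hg.two_mul_pairCount_compl (x := x + m * k) (y := y + m * k)
          (by have := hu.lt_ch; omega)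
        have h4 := hg'.two_mul_pairCount_compl (x := x + m * k) (y := y + m * k)
          (by have := hu.lt_ch; omega)
        have h5 := hlt (y + m * k + 1 - m) (x + m * k - 1) (by omega) (by omega) (by omega)
          (by omega)
        omega
    · omega
  · have h1 := hg'.two_mul_pairCount_of_le (x := x) (y := y) (by omega)
    have h2 := hg''.two_mul_pairCount_of_le (x := x) (y := y) (by omega)
    omega

lemma pairCount_lt (hu : IsUncrossing m g g'' h a e c) (hg : IsPairingLift m g)
    (hg'' : IsPairingLift m g'') : pairCount g a e < pairCount g'' a e := by
  obtain ⟨lha, lae, lec, lch, -⟩ := id hu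
  have := hu.pairCount_window hg hg'' (x := a) (y := e) (by omega) (by omega) (by omega)
  rw [if_pos (by omega)] at this
  omega

end IsUncrossing

/-- If `g ≠ g'` and every arc contains at most as many pairs of `g` as of `g'`, then `g` has two
crossing pairs, with no other pair in the way, which can be uncrossed while keeping this. -/
lemma IsPairingLift.exists_crossing {m : ℤ} {g g' : ℤ → ℤ} (hg : IsPairingLift m g)
    (hg' : IsPairingLift m g') (hle : ∀ x y, pairCount g x y ≤ pairCount g' x y) (a : ℤ)
    (hne : g a ≠ g' a) (hmin : ∀ i, g i ≠ g' i → g' a - a ≤ g' i - i) :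
    ∃ h e c, h < a ∧ a < e ∧ e < c ∧ c < h + m ∧ g a = c ∧ g h = e ∧
      (∀ i, h < i → i < a → ¬ (e < g i ∧ g i < c)) ∧
      ∀ x y, h < x → x ≤ a → e ≤ y → y < c → pairCount g x y < pairCount g' x y := by
  set d := g' a with hd
  have had : a < d := hg'.lt_apply a
  have hdm : d < a + m := hg'.apply_lt a
  have hca : g a < a + m := hg.apply_lt a
  have hin : pairCount g (a + 1) (d - 1) = pairCount g' (a + 1) (d - 1) := by
    apply le_antisymm (hle _ _)
    apply Finset.card_le_card
    intro i
    simp only [Finset.mem_filter, Finset.mem_Icc]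
    rintro ⟨hi, hi'⟩
    refine ⟨hi, ?_⟩
    by_contra hn
    have := hmin i (by omega)
    omega
  have hg1 := hg.pairCount_eq_succ a (d - 1)
  have hg1' := hg'.pairCount_eq_succ a (d - 1)
  have hle1 := hle a (d - 1)
  rw [← hd, if_neg (by omega)] at hg1'
  have hdc : d < g a := by
    split_ifs at hg1 <;> omega
  rw [if_neg (by omega)] at hg1
  have hrow : ∀ y, d ≤ y → y < g a → pairCount g a y < pairCount g' a y := by
    intro y hy1 hy2
    rw [hg.pairCount_eq_succ, hg'.pairCount_eq_succ, if_neg (by omega), if_pos (by omega)]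
    have := hle (a + 1) y
    omega
  -- the first column to the left of `a` meeting a vanishing defect
  have hfull : ∃ y, d ≤ y ∧ y < g a ∧ pairCount g (a - (a + m - g a).toNat) y =
      pairCount g' (a - (a + m - g a).toNat) y := by
    refine ⟨g a - 1, by omega, by omega, ?_⟩
    have e1 := hg.two_mul_pairCount_of_le (x := a - (a + m - g a).toNat) (y := g a - 1) (by omega)
    have e2 := hg'.two_mul_pairCount_of_le (x := a - (a + m - g a).toNat) (y := g a - 1) (by omega)
    omega
  have hex : ∃ t : ℕ, ∃ y, d ≤ y ∧ y < g a ∧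
      pairCount g (a - t) y = pairCount g' (a - t) y := ⟨_, hfull⟩
  have hpos : ∀ x y, a - Nat.find hex < x → x ≤ a → d ≤ y → y < g a →
      pairCount g x y < pairCount g' x y := by
    intro x y h1 h2 h3 h4
    have := Nat.find_min hex (m := (a - x).toNat) (by omega)
    push Not at this
    have := this y h3 h4
    rw [show a - ((a - x).toNat : ℤ) = x by omega] at this
    exact lt_of_le_of_ne (hle _ _) this
  have hbound : Nat.find hex ≤ (a + m - g a).toNat := Nat.find_min' hex hfull
  obtain ⟨y, hy1, hy2, hy3⟩ := Nat.find_spec hex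
  set x := a - (Nat.find hex : ℤ) with hx
  have hxa : x ≤ a := by omega
  have hchord : ((Finset.Ico x a).filter fun i => d ≤ g i ∧ g i < g a).Nonempty := by
    by_contra hn
    rw [Finset.not_nonempty_iff_eq_empty, Finset.filter_eq_empty_iff] at hn
    have s1 := hg.pairCount_eq_add_card hxa y
    have s2 := hg.pairCount_eq_add_card hxa (d - 1)
    have s1' := hg'.pairCount_eq_add_card hxa y
    have s2' := hg'.pairCount_eq_add_card hxa (d - 1)
    have e1 : ((Finset.Ico x a).filter fun i => g i ≤ y) =
        (Finset.Ico x a).filter fun i => g i ≤ d - 1 := by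
      apply Finset.filter_congr
      intro i hi
      have := hn hi
      omega
    have e2 : ((Finset.Ico x a).filter fun i => g' i ≤ d - 1).card ≤
        ((Finset.Ico x a).filter fun i => g' i ≤ y).card := by
      apply Finset.card_le_card
      apply Finset.monotone_filter_right
      intro i _ hi
      omega
    rw [e1] at s1
    have := hle x (d - 1)
    have := hrow y hy1 hy2
    omega
  obtain ⟨h, hh, hmax⟩ := Finset.exists_max_image _ id hchord
  simp only [Finset.mem_filter, Finset.mem_Ico, id] at hh hmax
  have hch : g a - m ≠ h := by
    rintro rfl
    have := hg.apply_sub (g a)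
    rw [hg.apply_apply] at this
    omega
  refine ⟨h, g h, g a, hh.1.2, by omega, hh.2.2, by omega, rfl, rfl, ?_, ?_⟩
  · intro i hi1 hi2 hi3
    have := hmax i (by omega)
    omega
  · intro x' y' h1 h2 h3 h4
    exact hpos x' y' (by omega) h2 (by omega) h4

/-- The residue of an integer, as an element of `Fin m`. -/
def resid {m : ℕ} (hm : 0 < m) (i : ℤ) : Fin m :=
  ⟨(i % (m : ℤ)).toNat, by
    have h1 := Int.emod_nonneg i (show (m : ℤ) ≠ 0 by omega)
    have h2 := Int.emod_lt_of_pos i (show (0 : ℤ) < m by omega)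
    omega⟩

section Residue

variable {m : ℕ} (hm : 0 < m)

lemma coe_resid (i : ℤ) : ((resid hm i : ℕ) : ℤ) = i % (m : ℤ) := by
  have h1 := Int.emod_nonneg i (show (m : ℤ) ≠ 0 by omega)
  simp only [resid]
  omega

lemma resid_coe (x : Fin m) : resid hm ((x : ℕ) : ℤ) = x := by
  apply Fin.ext
  have := coe_resid hm ((x : ℕ) : ℤ)
  rw [Int.emod_eq_of_lt (by omega) (by omega)] at this
  omega

lemma resid_eq_iff (i j : ℤ) : resid hm i = resid hm j ↔ (m : ℤ) ∣ i - j := by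
  have h1 := coe_resid hm i
  have h2 := coe_resid hm j
  rw [Int.dvd_iff_emod_eq_zero, ← Int.emod_eq_emod_iff_emod_sub_eq_zero]
  constructor
  · intro h
    rw [← h1, ← h2, h]
  · intro h
    apply Fin.ext
    omega

lemma resid_add (i : ℤ) : resid hm (i + m) = resid hm i := by
  rw [resid_eq_iff]; simp

lemma resid_sub (i : ℤ) : resid hm (i - m) = resid hm i := by
  rw [resid_eq_iff]; simp

lemma dvd_sub_resid (i : ℤ) : (m : ℤ) ∣ i - ((resid hm i : ℕ) : ℤ) := by
  rw [← resid_eq_iff hm, resid_coe]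

lemma eq_of_dvd_sub {m u v : ℤ} (hd : m ∣ u - v) (h1 : u - v < m) (h2 : v - u < m) : u = v := by
  have := Int.eq_zero_of_abs_lt_dvd hd (abs_lt.2 ⟨by omega, by omega⟩)
  omega

lemma eq_of_resid_eq {u v : ℤ} (h : resid hm u = resid hm v) (h1 : u - v < m) (h2 : v - u < m) :
    u = v :=
  eq_of_dvd_sub ((resid_eq_iff hm u v).1 h) h1 h2

lemma exists_lift_of_mem_cIoo {p q : ℤ} (hpq : p < q) (hqp : q < p + m) {x : Fin m}
    (hx : x ∈ cIoo (resid hm p) (resid hm q)) : ∃ z, p < z ∧ z < q ∧ resid hm z = x := by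
  have hp := dvd_sub_resid hm p
  have hq := dvd_sub_resid hm q
  set P := resid hm p
  set Q := resid hm q
  simp only [cIoo, Finset.mem_filter, Finset.mem_univ, true_and] at hx
  have hdiff : (m : ℤ) ∣ (q - p) - ((Q : ℕ) - (P : ℕ)) := by
    have := dvd_sub hq hp
    rwa [show q - (Q : ℕ) - (p - (P : ℕ)) = (q - p) - ((Q : ℕ) - (P : ℕ) : ℤ) by ring] at this
  have hz : resid hm (p + ((x : ℕ) - (P : ℕ))) = x := by
    conv_rhs => rw [← resid_coe hm x]
    rw [resid_eq_iff]
    convert hp using 1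
    ring
  split_ifs at hx with hPQ
  · have := eq_of_dvd_sub hdiff (by omega) (by omega)
    exact ⟨p + ((x : ℕ) - (P : ℕ)), by omega, by omega, hz⟩
  · have hdiff' : (m : ℤ) ∣ (q - p) - ((Q : ℕ) - (P : ℕ) + m) := by
      have := dvd_sub_self_right.2 hdiff
      rwa [sub_sub] at this
    have := eq_of_dvd_sub hdiff' (by omega) (by omega)
    by_cases hPx : P < x
    · exact ⟨p + ((x : ℕ) - (P : ℕ)), by omega, by omega, hz⟩
    · refine ⟨p + ((x : ℕ) - (P : ℕ)) + m, by omega, by omega, ?_⟩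
      rw [resid_add, hz]

lemma exists_lift_of_cyclicOrder4 {a b c d : Fin m} (h : CyclicOrder4 a b c d) :
    ∃ x y z w : ℤ, w < x ∧ x < y ∧ y < z ∧ z < w + m ∧ resid hm x = a ∧ resid hm y = b ∧
      resid hm z = c ∧ resid hm w = d := by
  rcases h with h | h | h | h
  · exact ⟨(a : ℕ), (b : ℕ), (c : ℕ), (d : ℕ) - m, by omega, by omega, by omega, by omega,
      by simp only [resid_coe, resid_sub, and_self]⟩
  · exact ⟨(a : ℕ), (b : ℕ) + m, (c : ℕ) + m, (d : ℕ), by omega, by omega, by omega, by omega,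
      by simp only [resid_coe, resid_add, and_self]⟩
  · exact ⟨(a : ℕ), (b : ℕ), (c : ℕ) + m, (d : ℕ), by omega, by omega, by omega, by omega,
      by simp only [resid_coe, resid_add, and_self]⟩
  · exact ⟨(a : ℕ), (b : ℕ), (c : ℕ), (d : ℕ), by omega, by omega, by omega, by omega,
      by simp only [resid_coe, and_self]⟩

lemma coe_resid_eq_or {z : ℤ} (h0 : 0 ≤ z) (h1 : z < m + m) :
    (z < m ∧ ((resid hm z : ℕ) : ℤ) = z) ∨ (m ≤ z ∧ ((resid hm z : ℕ) : ℤ) = z - m) := by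
  rcases lt_or_ge z m with h | h
  · exact .inl ⟨h, by rw [coe_resid, Int.emod_eq_of_lt h0 h]⟩
  · exact .inr ⟨h, by rw [← resid_sub, coe_resid, Int.emod_eq_of_lt (by omega) (by omega)]⟩

lemma cyclicOrder4_resid {h a e c : ℤ} (ha0 : 0 ≤ a) (ham : a < m) (h1 : h < a) (h2 : a < e)
    (h3 : e < c) (h4 : c < h + m) :
    CyclicOrder4 (resid hm a) (resid hm e) (resid hm c) (resid hm h) := by
  have ra := coe_resid_eq_or hm (z := a) (by omega) (by omega)
  have re := coe_resid_eq_or hm (z := e) (by omega) (by omega)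
  have rc := coe_resid_eq_or hm (z := c) (by omega) (by omega)
  have rh := coe_resid_eq_or hm (z := h + m) (by omega) (by omega)
  rw [resid_add] at rh
  simp only [CyclicOrder4, Fin.lt_def]
  omega

lemma fin_sub_eq_iff (x a y : Fin m) :
    x - a = y ↔ (m : ℤ) ∣ ((x : ℕ) : ℤ) - ((a : ℕ) + (y : ℕ)) := by
  have h : (((x - a : Fin m) : ℕ) : ℤ) = x - a ∨ (((x - a : Fin m) : ℕ) : ℤ) = x - a + m := by
    rcases le_or_gt a x with h | h
    · have := Fin.coe_sub_iff_le.2 h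
      omega
    · have := Fin.coe_sub_iff_lt.2 h
      omega
  constructor
  · rintro rfl
    rcases h with h | h
    · exact ⟨0, by omega⟩
    · exact ⟨-1, by omega⟩
  · intro hd
    apply Fin.ext
    have : (((x - a : Fin m) : ℕ) : ℤ) = y := by
      apply eq_of_dvd_sub (m := m) _ (by omega) (by omega)
      rcases h with h | h
      · rw [h, sub_sub]; exact hd
      · rw [h, show (x : ℤ) - a + m - y = (x : ℤ) - (a + y) + m by ring]
        exact dvd_add_self_right.2 hd
    omega

end Residue

section Matching

variable {n : ℕ} (hn : 0 < 2 * n) {τ τ' : Fin (2 * n) → Fin (2 * n)}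

lemma gTau_eq (τ : Fin (2 * n) → Fin (2 * n)) (i : ℤ) :
    gTau n τ i = i - ((resid hn i : ℕ) : ℤ) + if resid hn i < τ (resid hn i) then
      ((τ (resid hn i) : ℕ) : ℤ) else ((τ (resid hn i) : ℕ) : ℤ) + (2 * n : ℕ) := by
  have h : (i % ((2 * n : ℕ) : ℤ)).toNat < 2 * n := (resid hn i).isLt
  rw [gTau, dif_pos h, coe_resid]
  simp only [resid]
  push_cast
  rfl

lemma resid_gTau (τ : Fin (2 * n) → Fin (2 * n)) (i : ℤ) :
    resid hn (gTau n τ i) = τ (resid hn i) := by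
  have h := dvd_sub_resid hn i
  conv_rhs => rw [← resid_coe hn (τ (resid hn i))]
  rw [gTau_eq hn, resid_eq_iff]
  split_ifs
  · simpa using h
  · rw [← add_assoc, add_sub_right_comm, dvd_add_self_right, add_sub_cancel_right]
    exact h

include hn in
lemma lt_gTau (τ : Fin (2 * n) → Fin (2 * n)) (i : ℤ) : i < gTau n τ i := by
  rw [gTau_eq hn]
  split_ifs <;> omega

include hn in
lemma gTau_lt (hτ : IsMatching τ) (i : ℤ) : gTau n τ i < i + (2 * n : ℕ) := by
  have := hτ.2 (resid hn i)
  rw [gTau_eq hn]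
  split_ifs <;> omega

lemma gTau_eq_of_resid_eq (hτ : IsMatching τ) {i z : ℤ} (h : resid hn z = τ (resid hn i))
    (h1 : i < z) (h2 : z < i + (2 * n : ℕ)) : gTau n τ i = z := by
  have := lt_gTau hn τ i
  have := gTau_lt hn hτ i
  exact eq_of_resid_eq hn (by rw [h, resid_gTau]) (by omega) (by omega)

include hn in
lemma isPairingLift_gTau (hτ : IsMatching τ) : IsPairingLift (2 * n : ℕ) (gTau n τ) where
  lt_apply := lt_gTau hn τ
  apply_lt := gTau_lt hn hτ
  apply_apply i := by
    have := lt_gTau hn τ i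
    have := gTau_lt hn hτ i
    apply gTau_eq_of_resid_eq hn hτ _ (by omega) (by omega)
    rw [resid_add, resid_gTau, hτ.1]

include hn in
lemma pairCount_le_of_uncrossCover (h : UncrossCover τ' τ) (x y : ℤ) :
    pairCount (gTau n τ) x y ≤ pairCount (gTau n τ') x y := by
  obtain ⟨hτ', hτ, a, b, c, d, hc, hac, hbd, hag, h⟩ := h
  suffices key : ∀ a b c d, CyclicOrder4 a b c d → τ a = c → τ b = d →
      (∀ x, x ≠ a → x ≠ b → x ≠ c → x ≠ d → τ' x = τ x) → τ' a = b → τ' c = d →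
      pairCount (gTau n τ) x y ≤ pairCount (gTau n τ') x y by
    rcases h with ⟨h1, h2, -⟩ | ⟨h1, h2, -⟩
    · refine key b c d a ?_ hbd (by rw [← hac, hτ.1]) (fun x hb hc hd ha => hag x ha hb hc hd) h2
        (by rw [← h1, hτ'.1])
      simp only [CyclicOrder4] at hc ⊢
      tauto
    · exact key a b c d hc hac hbd hag h1 h2
  clear! a b c d
  intro a b c d hc hac hbd hag hab hcd
  obtain ⟨p, q, r, s, h1, h2, h3, h4, rfl, rfl, rfl, rfl⟩ := exists_lift_of_cyclicOrder4 hn hc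
  have hu : IsUncrossing (2 * n : ℕ) (gTau n τ) (gTau n τ') s p q r := by
    refine ⟨h1, h2, h3, h4, ?_, ?_, ?_, ?_, ?_⟩
    · exact gTau_eq_of_resid_eq hn hτ hac.symm (by omega) (by omega)
    · exact gTau_eq_of_resid_eq hn hτ (by rw [← hbd, hτ.1]) (by omega) (by omega)
    · exact gTau_eq_of_resid_eq hn hτ' hab.symm (by omega) (by omega)
    · exact gTau_eq_of_resid_eq hn hτ' (by rw [← hcd, hτ'.1]) (by omega) (by omega)
    · intro i i1 i2 i3 i4
      simp only [← resid_eq_iff hn] at i1 i2 i3 i4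
      rw [gTau_eq hn, gTau_eq hn, hag _ i2 i3 i4 i1]
  exact hu.pairCount_mono (isPairingLift_gTau hn hτ) (isPairingLift_gTau hn hτ') x y

include hn in
lemma pairCount_le_of_uncrossLE (h : uncrossLE τ' τ) (x y : ℤ) :
    pairCount (gTau n τ) x y ≤ pairCount (gTau n τ') x y := by
  induction h with
  | refl => exact le_rfl
  | tail _ hc ih => exact (pairCount_le_of_uncrossCover hn hc x y).trans ih

/-- The function agreeing with `τ` except that it exchanges `a, e` and `c, h`. -/
def rematch {m : ℕ} (τ : Fin m → Fin m) (a e c h : Fin m) (x : Fin m) : Fin m :=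
  if x = a then e else if x = e then a else if x = c then h else if x = h then c else τ x

lemma isMatching_rematch {m : ℕ} {τ : Fin m → Fin m} (hτ : IsMatching τ) {a e c h : Fin m}
    (hac : τ a = c) (heh : τ e = h) (hae : a ≠ e) (hec : e ≠ c) :
    IsMatching (rematch τ a e c h) := by
  have hca : τ c = a := by rw [← hac, hτ.1]
  have hhe : τ h = e := by rw [← heh, hτ.1]
  have hac' : a ≠ c := by rw [← hac]; exact (hτ.2 a).symm
  have heh' : e ≠ h := by rw [← heh]; exact (hτ.2 e).symm
  have hah : a ≠ h := by rintro rfl; exact hec (hhe.symm.trans hac)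
  have hch : c ≠ h := by rintro rfl; exact hae (hca.symm.trans hhe)
  constructor
  · intro x
    have hx := hτ.1 x
    unfold rematch
    grind
  · intro x
    have hx := hτ.2 x
    unfold rematch
    grind

lemma exists_uncrossCover (hτ : IsMatching τ) (hτ' : IsMatching τ') (hne : τ ≠ τ')
    (hle : ∀ x y, pairCount (gTau n τ) x y ≤ pairCount (gTau n τ') x y) :
    ∃ τ'', UncrossCover τ'' τ ∧
      (∀ x y, pairCount (gTau n τ'') x y ≤ pairCount (gTau n τ') x y) ∧
      ∃ a e : ℤ, 0 ≤ a ∧ a < (2 * n : ℕ) ∧ a < e ∧ e < a + (2 * n : ℕ) ∧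
        pairCount (gTau n τ) a e < pairCount (gTau n τ'') a e := by
  obtain ⟨x₀, hx₀⟩ := Function.ne_iff.1 hne
  have hn : 0 < 2 * n := by have := x₀.isLt; omega
  have hg := isPairingLift_gTau hn hτ
  have hg' := isPairingLift_gTau hn hτ'
  obtain ⟨a', ha', hmin⟩ := Finset.exists_min_image
    (univ.filter fun x : Fin (2 * n) => gTau n τ (x : ℕ) ≠ gTau n τ' (x : ℕ))
    (fun x => gTau n τ' (x : ℕ) - (x : ℕ)) ⟨x₀, by
      simp only [Finset.mem_filter, Finset.mem_univ, true_and]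
      intro h
      have h' := congrArg (resid hn) h
      rw [resid_gTau, resid_gTau, resid_coe] at h'
      exact hx₀ h'⟩
  simp only [Finset.mem_filter, Finset.mem_univ, true_and] at ha' hmin
  have hmin' : ∀ i : ℤ, gTau n τ i ≠ gTau n τ' i →
      gTau n τ' (a' : ℕ) - (a' : ℕ) ≤ gTau n τ' i - i := by
    intro i hi
    obtain ⟨k, hk⟩ := dvd_sub_resid hn i
    have hk' : i = (resid hn i : ℕ) + (2 * n : ℕ) * k := by rw [← hk]; ring
    have e1 := hg.apply_add_mul (resid hn i : ℕ) k
    have e2 := hg'.apply_add_mul (resid hn i : ℕ) k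
    rw [← hk'] at e1 e2
    have := hmin (resid hn i) (by omega)
    omega
  obtain ⟨a, ha⟩ : ∃ a : ℤ, a = (a' : ℕ) := ⟨_, rfl⟩
  rw [← ha] at ha' hmin'
  obtain ⟨h, e, c, h1, h2, h3, h4, hac, hhe, hmid, hpos⟩ :=
    hg.exists_crossing hg' hle a ha' hmin'
  have rac : τ (resid hn a) = resid hn c := by rw [← hac, resid_gTau]
  have reh : τ (resid hn e) = resid hn h := by rw [← hhe, resid_gTau, hτ.1]
  have hcyc := cyclicOrder4_resid hn (by omega) (by omega) h1 h2 h3 h4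
  have hae : resid hn a ≠ resid hn e := by
    intro h; have := eq_of_resid_eq hn h; omega
  have hec : resid hn e ≠ resid hn c := by
    intro h; have := eq_of_resid_eq hn h; omega
  have hac' : resid hn a ≠ resid hn c := by
    intro h; have := eq_of_resid_eq hn h; omega
  have hch : resid hn c ≠ resid hn h := by
    intro h; have := eq_of_resid_eq hn h; omega
  have hah : resid hn a ≠ resid hn h := by
    intro h; have := eq_of_resid_eq hn h; omega
  have heh : resid hn e ≠ resid hn h := by
    intro h; have := eq_of_resid_eq hn h; omega
  set τ'' := rematch τ (resid hn a) (resid hn e) (resid hn c) (resid hn h) with hτ''def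
  have ra : τ'' (resid hn a) = resid hn e := by simp [τ'', rematch]
  have rc : τ'' (resid hn c) = resid hn h := by simp [τ'', rematch, hac'.symm, hec.symm]
  have rh : τ'' (resid hn h) = resid hn c := by
    simp [τ'', rematch, hah.symm, heh.symm, hch.symm]
  have rother : ∀ x, x ≠ resid hn a → x ≠ resid hn e → x ≠ resid hn c → x ≠ resid hn h →
      τ'' x = τ x := by
    intro x x1 x2 x3 x4
    simp [τ'', rematch, x1, x2, x3, x4]
  have hτ'' : IsMatching τ'' := isMatching_rematch hτ rac reh hae hec
  have hg'' := isPairingLift_gTau hn hτ''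
  have hu : IsUncrossing (2 * n : ℕ) (gTau n τ) (gTau n τ'') h a e c := by
    refine ⟨h1, h2, h3, h4, hac, hhe, ?_, ?_, ?_⟩
    · exact gTau_eq_of_resid_eq hn hτ'' ra.symm (by omega) (by omega)
    · exact gTau_eq_of_resid_eq hn hτ'' rh.symm (by omega) (by omega)
    · intro i i1 i2 i3 i4
      simp only [← resid_eq_iff hn] at i1 i2 i3 i4
      rw [gTau_eq hn, gTau_eq hn, rother _ i2 i3 i4 i1]
  refine ⟨τ'', ⟨hτ'', hτ, _, _, _, _, hcyc, rac, reh, rother, .inr ⟨ra, rc, ?_⟩⟩,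
    hu.pairCount_le_of_pos hg hg'' hg' hle hpos, a, e, by omega, by omega, h2, by omega,
    hu.pairCount_lt hg hg''⟩
  intro x hx hx'
  obtain ⟨z, hz1, hz2, rfl⟩ := exists_lift_of_mem_cIoo hn h3 (by omega) hx
  obtain ⟨w, hw1, hw2, hw⟩ := exists_lift_of_mem_cIoo hn h1 (by omega) hx'
  have hzw : gTau n τ w = z :=
    gTau_eq_of_resid_eq hn hτ (by rw [hw, hτ.1]) (by omega) (by omega)
  exact hmid w hw1 hw2 (by omega)

lemma uncrossLE_of_pairCount_le (hτ : IsMatching τ) (hτ' : IsMatching τ')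
    (hle : ∀ x y, pairCount (gTau n τ) x y ≤ pairCount (gTau n τ') x y) : uncrossLE τ' τ := by
  induction hN : ∑ p ∈ Finset.Ico (0 : ℤ) (2 * n : ℕ) ×ˢ Finset.Ico (0 : ℤ) (2 * (2 * n : ℕ)),
    (pairCount (gTau n τ') p.1 p.2 - pairCount (gTau n τ) p.1 p.2)
    using Nat.strong_induction_on generalizing τ with
  | _ N ih =>
    by_cases hne : τ = τ'
    · rw [hne]; exact Relation.ReflTransGen.refl
    · obtain ⟨τ'', hcov, hle'', a, e, ha0, ham, hae, hea, hlt⟩ := exists_uncrossCover hτ hτ' hne hle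
      have hn : 0 < 2 * n := by omega
      refine Relation.ReflTransGen.tail (ih _ ?_ hcov.1 hle'' rfl) hcov
      rw [← hN]
      apply Finset.sum_lt_sum
      · intro p _
        have := pairCount_le_of_uncrossCover hn hcov p.1 p.2
        omega
      · refine ⟨(a, e), ?_, ?_⟩
        · simp only [Finset.mem_product, Finset.mem_Ico]
          omega
        · have := hle'' a e
          simp only
          omega

include hn in
lemma rankMat_fTau (hτ : IsMatching τ) (i j : ℤ) :
    rankMat (fTau n τ) i j = pairCount (gTau n τ) (j + 1 - (2 * n : ℕ)) i := by
  have hg := isPairingLift_gTau hn hτ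
  rw [rankMat, pairCount, ← Set.ncard_coe_finset,
    ← Set.ncard_image_of_injective
      (((Finset.Icc (j + 1 - (2 * n : ℕ)) i).filter fun a => gTau n τ a ≤ i : Finset ℤ) : Set ℤ)
      hg.injective]
  congr 1
  ext b
  simp only [fTau, Set.mem_ofPred_eq, Set.mem_image, Finset.coe_filter, Finset.mem_Icc]
  constructor
  · rintro ⟨h1, h2⟩
    have h3 := hg.apply_sub (gTau n τ b)
    rw [hg.apply_apply] at h3
    have := hg.apply_lt b
    exact ⟨gTau n τ b - (2 * n : ℕ), by omega, by omega⟩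
  · rintro ⟨x, hx, rfl⟩
    rw [hg.apply_apply]
    omega

include hn in
lemma bruhatLE_fTau_iff (hτ : IsMatching τ) (hτ' : IsMatching τ') :
    bruhatLE (fTau n τ) (fTau n τ') ↔
      ∀ x y, pairCount (gTau n τ) x y ≤ pairCount (gTau n τ') x y := by
  simp only [bruhatLE, rankMat_fTau hn hτ, rankMat_fTau hn hτ']
  constructor
  · intro h x y
    have := h y (x + (2 * n : ℕ) - 1)
    rwa [show x + (2 * n : ℕ) - 1 + 1 - (2 * n : ℕ) = x by ring] at this
  · intro h i j
    exact h _ _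

lemma mem_necklaceI {m : ℕ} {f : ℤ → ℤ} {a : ℤ} {x : Fin m} :
    x ∈ necklaceI m f a ↔ ∃ b, b < a ∧ a ≤ f b ∧ f b % (m : ℤ) = ((x : ℕ) : ℤ) := by
  simp [necklaceI]

include hn in
lemma mem_image_necklaceI (hτ : IsMatching τ) (a y : Fin (2 * n)) :
    y ∈ (necklaceI (2 * n) (fTau n τ) ((a : ℕ) : ℤ)).image (· - a) ↔
      gTau n τ ((a : ℕ) + (y : ℕ) + 1) ≤ (a : ℕ) + (2 * n : ℕ) - 1 := by
  have hg := isPairingLift_gTau hn hτ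
  simp only [Finset.mem_image, mem_necklaceI, fTau]
  constructor
  · rintro ⟨x, ⟨b, hb1, hb2, hb3⟩, hxy⟩
    rw [fin_sub_eq_iff, ← hb3] at hxy
    have hd : ((2 * n : ℕ) : ℤ) ∣ gTau n τ b - 1 - ((a : ℕ) + (y : ℕ)) := by
      have := dvd_add hxy (Int.dvd_self_sub_emod (x := gTau n τ b - 1) (m := ((2 * n : ℕ) : ℤ)))
      rwa [sub_add_sub_comm, add_comm, add_sub_add_right_eq_sub] at this
    have := hg.apply_lt b
    have := eq_of_dvd_sub hd (by omega) (by omega)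
    rw [show ((a : ℕ) : ℤ) + (y : ℕ) + 1 = gTau n τ b by omega, hg.apply_apply]
    omega
  · intro h
    have h1 := hg.apply_sub (gTau n τ ((a : ℕ) + (y : ℕ) + 1))
    rw [hg.apply_apply, add_sub_cancel_right] at h1
    refine ⟨resid hn ((a : ℕ) + (y : ℕ)),
      ⟨gTau n τ ((a : ℕ) + (y : ℕ) + 1) - (2 * n : ℕ), ?_, ?_, ?_⟩, ?_⟩
    · omega
    · omega
    · rw [h1, coe_resid]
      congr 1
      omega
    · rw [fin_sub_eq_iff, dvd_sub_comm]
      exact dvd_sub_resid hn _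

include hn in
lemma card_filter_image_necklaceI (hτ : IsMatching τ) (a t : Fin (2 * n)) :
    (((necklaceI (2 * n) (fTau n τ) ((a : ℕ) : ℤ)).image (· - a)).filter (t ≤ ·)).card =
      pairCount (gTau n τ) ((a : ℕ) + (t : ℕ) + 1) ((a : ℕ) + (2 * n : ℕ) - 1) := by
  unfold pairCount
  apply Finset.card_bij (fun (y : Fin (2 * n)) _ => ((a : ℕ) : ℤ) + (y : ℕ) + 1)
  · intro y
    have := (isPairingLift_gTau hn hτ).lt_apply ((a : ℕ) + (y : ℕ) + 1)
    rw [Finset.mem_filter, mem_image_necklaceI hn hτ]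
    simp only [Finset.mem_filter, Finset.mem_Icc]
    omega
  · intro y _ z _ h
    apply Fin.ext
    omega
  · intro i hi
    simp only [Finset.mem_filter, Finset.mem_Icc] at hi
    have e : ((a : ℕ) : ℤ) + ((i - (a : ℕ) - 1).toNat : ℕ) + 1 = i := by omega
    refine ⟨⟨(i - (a : ℕ) - 1).toNat, by omega⟩, ?_, e⟩
    rw [Finset.mem_filter, mem_image_necklaceI hn hτ, e, Fin.le_def]
    simp only
    omega

include hn in
lemma card_image_necklaceI (hτ : IsMatching τ) (a : Fin (2 * n)) :
    ((necklaceI (2 * n) (fTau n τ) ((a : ℕ) : ℤ)).image (· - a)).card = n - 1 := by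
  have hg := isPairingLift_gTau hn hτ
  have h1 := card_filter_image_necklaceI hn hτ a ⟨0, hn⟩
  rw [Finset.filter_true_of_mem (by intro x _; rw [Fin.le_def]; simp)] at h1
  have h2 := hg.two_mul_pairCount_compl (x := (a : ℕ) + 1)
    (y := (a : ℕ) + (2 * n : ℕ) - 1) (by omega)
  rw [show ((a : ℕ) : ℤ) + (2 * n : ℕ) - 1 + 1 - (2 * n : ℕ) = (a : ℕ) by ring,
    show ((a : ℕ) : ℤ) + 1 - 1 = (a : ℕ) by ring, hg.pairCount_eq_succ (a : ℕ),
    IsPairingLift.pairCount_of_lt (x := (a : ℕ) + 1) (y := (a : ℕ)) (by omega), if_neg (by have := hg.lt_apply (a : ℕ); omega)] at h2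
  rw [h1]
  simp only [Nat.cast_zero, add_zero]
  omega

lemma card_filter_le_eq_card_filter_orderEmbOfFin {m k : ℕ} {I : Finset (Fin m)} (hI : I.card = k)
    (t : Fin m) : (I.filter (t ≤ ·)).card = (univ.filter fun r => t ≤ I.orderEmbOfFin hI r).card := by
  conv_lhs => rw [← Finset.map_orderEmbOfFin_univ I hI, Finset.filter_map, Finset.card_map]
  rfl

lemma domLE_iff {m k : ℕ} {I J : Finset (Fin m)} (hI : I.card = k) (hJ : J.card = k) :
    domLE k I J ↔ ∀ t, (I.filter (t ≤ ·)).card ≤ (J.filter (t ≤ ·)).card := by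
  simp only [card_filter_le_eq_card_filter_orderEmbOfFin hI,
    card_filter_le_eq_card_filter_orderEmbOfFin hJ]
  constructor
  · rintro ⟨_, _, h⟩ t
    apply Finset.card_le_card
    apply Finset.monotone_filter_right
    intro r _ hr
    exact hr.trans (h r)
  · intro h
    refine ⟨hI, hJ, fun r => ?_⟩
    by_contra! hlt
    apply (h (I.orderEmbOfFin hI r)).not_gt
    apply Finset.card_lt_card
    rw [Finset.ssubset_iff_of_subset]
    · exact ⟨r, by simp, by simpa using hlt⟩
    · intro s hs
      simp only [Finset.mem_filter, Finset.mem_univ, true_and] at hs ⊢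
      rw [OrderEmbedding.le_iff_le]
      by_contra! hsr
      exact (hlt.trans_le hs).not_gt ((J.orderEmbOfFin hJ).lt_iff_lt.2 hsr)

include hn in
lemma forall_sdomLE_necklaceI_iff (hτ : IsMatching τ) (hτ' : IsMatching τ') :
    (∀ a : Fin (2 * n), sdomLE (n - 1) a (necklaceI (2 * n) (fTau n τ) ((a : ℕ) : ℤ))
      (necklaceI (2 * n) (fTau n τ') ((a : ℕ) : ℤ))) ↔
      ∀ x y, pairCount (gTau n τ) x y ≤ pairCount (gTau n τ') x y := by
  have hg := isPairingLift_gTau hn hτ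
  have hg' := isPairingLift_gTau hn hτ'
  simp only [sdomLE, domLE_iff (card_image_necklaceI hn hτ _) (card_image_necklaceI hn hτ' _),
    card_filter_image_necklaceI hn hτ, card_filter_image_necklaceI hn hτ']
  constructor
  · intro h x y
    rcases le_or_gt (x + (2 * n : ℕ)) (y + 1) with hxy | hxy
    · have h1 := hg.two_mul_pairCount_of_le hxy
      have h2 := hg'.two_mul_pairCount_of_le hxy
      omega
    rcases lt_or_ge y x with hyx | hyx
    · rw [IsPairingLift.pairCount_of_lt hyx]
      exact Nat.zero_le _
    obtain ⟨k, hk⟩ := dvd_sub_resid hn (y + 1)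
    have e : y = (resid hn (y + 1) : ℕ) + (2 * n : ℕ) - 1 + (2 * n : ℕ) * (k - 1) := by
      rw [mul_sub, ← hk]; ring
    have := h (resid hn (y + 1)) ⟨(x + (2 * n : ℕ) - y - 2).toNat, by omega⟩
    rw [← hg.pairCount_add_mul _ _ (k - 1), ← hg'.pairCount_add_mul _ _ (k - 1), ← e] at this
    convert this using 2 <;> simp only <;> omega
  · intro h a t
    exact h _ _

end Matching

theorem stmt8 (n : ℕ) (hn : 0 < n) (τ τ' : Fin (2*n) → Fin (2*n))
    (hτ : IsMatching τ) (hτ' : IsMatching τ') :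
    (uncrossLE τ' τ ↔ bruhatLE (fTau n τ) (fTau n τ')) ∧
    (uncrossLE τ' τ ↔ ∀ a : Fin (2*n),
      sdomLE (n-1) a (necklaceI (2*n) (fTau n τ) ((a:ℕ):ℤ))
        (necklaceI (2*n) (fTau n τ') ((a:ℕ):ℤ))) := by
  have hn' : 0 < 2 * n := by omega
  rw [bruhatLE_fTau_iff hn' hτ hτ', forall_sdomLE_necklaceI_iff hn' hτ hτ']
  have h : uncrossLE τ' τ ↔ ∀ x y, pairCount (gTau n τ) x y ≤ pairCount (gTau n τ') x y :=
    ⟨fun h => pairCount_le_of_uncrossLE hn' h, uncrossLE_of_pairCount_le hτ hτ'⟩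
  exact ⟨h, h⟩

end
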